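/- For any universe U with |U| ≥ 3 and any Condorcet extension f (an SCF that uniquely selects the Condorcet winner whenever one exists), f is P̂-manipulable: there exist a feasible set A, a voter i, and preference profiles R, R' differing only in voter i's preferences such that f(R',A) P̂_i f(R,A), where P̂_i is the strict part of Kelly's extension. -/

import Mathlib

open scoped Classical

variable {U : Type*}

/-- A relation is complete (total). -/
def Complete (R : U → U → Prop) : Prop := ∀ a b : U, R a b ∨ R b a

/-- Strict part of a preference relation. -/
def StrictPref (R : U → U → Prop) (a b : U) : Prop := R a b ∧ ¬ R b a

/-- Indifference part of a preference relation. -/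
def Indiff (R : U → U → Prop) (a b : U) : Prop := R a b ∧ R b a

/-- Kelly's weak set extension: every element of `X` is weakly preferred to every element of `Y`. -/
def KellyR (R : U → U → Prop) (X Y : Finset U) : Prop := ∀ x ∈ X, ∀ y ∈ Y, R x y

/-- Kelly's strict set extension. -/
def KellyP (R : U → U → Prop) (X Y : Finset U) : Prop :=
  KellyR R X Y ∧ ∃ x ∈ X, ∃ y ∈ Y, StrictPref R x y

/-- A social choice function: for any number of voters, maps a preference profile and a
feasible set to a nonempty subset of it, depending only on preferences restricted to it. -/
structure SCF (U : Type*) where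
  choice : ∀ n : ℕ, (Fin n → U → U → Prop) → Finset U → Finset U
  choice_subset : ∀ n R A, choice n R A ⊆ A
  choice_nonempty : ∀ n (R : Fin n → U → U → Prop) (A : Finset U),
    A.Nonempty → (choice n R A).Nonempty
  iia : ∀ n (R R' : Fin n → U → U → Prop) (A : Finset U),
    (∀ i, ∀ a ∈ A, ∀ b ∈ A, R i a b ↔ R' i a b) → choice n R A = choice n R' A

/-- `R'` is obtained from `R` by weakly strengthening `a` against `b`:
either `R' = R`, or `R' = R ∪ {(a,b)}`, or `R' = (R \ {(b,a)}) ∪ {(a,b)}`. -/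
def weaklyStrengthens (R R' : U → U → Prop) (a b : U) : Prop :=
  (∀ x y, R' x y ↔ R x y) ∨
  (∀ x y, R' x y ↔ (R x y ∨ (x = a ∧ y = b))) ∨
  (∀ x y, R' x y ↔ ((R x y ∧ ¬(x = b ∧ y = a)) ∨ (x = a ∧ y = b)))

/-- Set-monotonicity: the choice set is invariant under weakening unchosen alternatives. -/
def SetMonotone (f : SCF U) : Prop :=
  ∀ (n : ℕ) (R R' : Fin n → U → U → Prop) (A : Finset U) (i : Fin n) (a b : U),
    (∀ j, Complete (R j)) → (∀ j, Complete (R' j)) → A.Nonempty →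
    a ∈ A → b ∈ A → b ∉ f.choice n R A →
    (∀ j, j ≠ i → R' j = R j) →
    weaklyStrengthens (R i) (R' i) a b →
    f.choice n R' A = f.choice n R A

/-- Strong monotonicity (Maskin-style). -/
def StrongMonotone (f : SCF U) : Prop :=
  ∀ (n : ℕ) (R R' : Fin n → U → U → Prop) (A : Finset U) (i : Fin n) (a b x : U),
    (∀ j, Complete (R j)) → (∀ j, Complete (R' j)) → A.Nonempty →
    a ∈ A → b ∈ A → b ≠ x → x ∈ f.choice n R A →
    (∀ j, j ≠ i → R' j = R j) →
    weaklyStrengthens (R i) (R' i) a b →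
    x ∈ f.choice n R' A

/-- Monotonicity: a chosen alternative stays chosen when it is weakly strengthened. -/
def MonotoneSCF (f : SCF U) : Prop :=
  ∀ (n : ℕ) (R R' : Fin n → U → U → Prop) (A : Finset U) (i : Fin n) (a b : U),
    (∀ j, Complete (R j)) → (∀ j, Complete (R' j)) → A.Nonempty →
    a ∈ A → b ∈ A → a ∈ f.choice n R A →
    (∀ j, j ≠ i → R' j = R j) →
    weaklyStrengthens (R i) (R' i) a b →
    a ∈ f.choice n R' A

/-- Independence of unchosen alternatives. -/
def IUA (f : SCF U) : Prop :=
  ∀ (n : ℕ) (R R' : Fin n → U → U → Prop) (A : Finset U),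
    (∀ j, Complete (R j)) → (∀ j, Complete (R' j)) → A.Nonempty →
    (∀ i : Fin n, ∀ a ∈ f.choice n R A, ∀ b ∈ A,
      (R i a b ↔ R' i a b) ∧ (R i b a ↔ R' i b a)) →
    f.choice n R' A = f.choice n R A

/-- Strong superset property: choice sets are invariant under removal of unchosen alternatives. -/
def SSP (f : SCF U) : Prop :=
  ∀ (n : ℕ) (R : Fin n → U → U → Prop) (A B : Finset U),
    (∀ j, Complete (R j)) → A.Nonempty →
    f.choice n R A ⊆ B → B ⊆ A →
    f.choice n R B = f.choice n R A

/-- Weak R̂-group-strategyproofness: no group can obtain a Kelly-weakly-preferred different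
choice set by misreporting only their strict preferences. -/
def WeakKellyGroupSP (f : SCF U) : Prop :=
  ¬ ∃ (n : ℕ) (R R' : Fin n → U → U → Prop) (A : Finset U) (G : Finset (Fin n)),
    (∀ j, Complete (R j)) ∧ (∀ j, Complete (R' j)) ∧ A.Nonempty ∧
    (∀ i, i ∉ G → R' i = R i) ∧
    (∀ i ∈ G, ∀ a b : U, Indiff (R i) a b → Indiff (R' i) a b) ∧
    f.choice n R' A ≠ f.choice n R A ∧
    (∀ i ∈ G, KellyR (R i) (f.choice n R' A) (f.choice n R A))

/-- Weak R̂-strategyproofness (single manipulator misreporting only strict preferences). -/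
def WeakKellySP (f : SCF U) : Prop :=
  ¬ ∃ (n : ℕ) (R R' : Fin n → U → U → Prop) (A : Finset U) (i : Fin n),
    (∀ j, Complete (R j)) ∧ (∀ j, Complete (R' j)) ∧ A.Nonempty ∧
    (∀ j, j ≠ i → R' j = R j) ∧
    (∀ a b : U, Indiff (R i) a b → Indiff (R' i) a b) ∧
    f.choice n R' A ≠ f.choice n R A ∧
    KellyR (R i) (f.choice n R' A) (f.choice n R A)

/-- Weak P̂-strategyproofness (single manipulator misreporting only strict preferences). -/
def WeakKellyPSP (f : SCF U) : Prop :=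
  ¬ ∃ (n : ℕ) (R R' : Fin n → U → U → Prop) (A : Finset U) (i : Fin n),
    (∀ j, Complete (R j)) ∧ (∀ j, Complete (R' j)) ∧ A.Nonempty ∧
    (∀ j, j ≠ i → R' j = R j) ∧
    (∀ a b : U, Indiff (R i) a b → Indiff (R' i) a b) ∧
    f.choice n R' A ≠ f.choice n R A ∧
    KellyP (R i) (f.choice n R' A) (f.choice n R A)

/-- Net majority margin of `a` against `b`. -/
noncomputable def margin {n : ℕ} (R : Fin n → U → U → Prop) (a b : U) : ℤ :=
  ((Finset.univ.filter fun i => StrictPref (R i) a b).card : ℤ) -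
  ((Finset.univ.filter fun i => StrictPref (R i) b a).card : ℤ)

/-- A pairwise SCF: the outcome depends only on the net pairwise majority margins. -/
def PairwiseSCF (f : SCF U) : Prop :=
  ∀ (n m : ℕ) (R : Fin n → U → U → Prop) (R' : Fin m → U → U → Prop) (A : Finset U),
    (∀ j, Complete (R j)) → (∀ j, Complete (R' j)) →
    (∀ a ∈ A, ∀ b ∈ A, margin R a b = margin R' a b) →
    f.choice n R A = f.choice m R' A

/-- Condorcet winner: beats every other feasible alternative in pairwise majority comparisons. -/
def CondorcetWinner {V : Type*} [Fintype V] (R : V → U → U → Prop) (A : Finset U)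
    (c : U) : Prop :=
  c ∈ A ∧ ∀ b ∈ A, b ≠ c →
    (Finset.univ.filter fun i => R i c b).card > (Finset.univ.filter fun i => R i b c).card

/-- A Condorcet extension uniquely selects the Condorcet winner whenever one exists. -/
def CondorcetExtension (f : SCF U) : Prop :=
  ∀ (n : ℕ) (R : Fin n → U → U → Prop) (A : Finset U) (c : U),
    (∀ j, Complete (R j)) → CondorcetWinner R A c → f.choice n R A = {c}

/-- A resolute SCF always chooses a single alternative. -/
def Resolute (f : SCF U) : Prop :=
  ∀ (n : ℕ) (R : Fin n → U → U → Prop) (A : Finset U),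
    (∀ j, Complete (R j)) → A.Nonempty → (f.choice n R A).card = 1

/-!
Suppose a Condorcet extension `f` is not manipulable. A voter who *vetoes* `x`, ranking `x` strictly
last and tying everything else, would gain by any misreport that removes `x` from the choice set;
so `x` stays chosen however the voters vetoing `x` vote. If those voters can make some `y ≠ x` the
Condorcet winner, this is absurd, hence `x` was not chosen in the first place. With two vetoers for
each of `a`, `b`, `c` and one voter with the cycle `a ≻ b ≻ c ≻ a`, this excludes all three.
-/

/-- Manipulability with respect to the strict part of Kelly's extension: some voter can, by
misreporting, obtain a choice set that is strictly better for the true preferences. -/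
def KellyManipulable (f : SCF U) : Prop :=
  ∃ (n : ℕ) (R R' : Fin n → U → U → Prop) (A : Finset U) (i : Fin n),
    (∀ j, Complete (R j)) ∧ (∀ j, Complete (R' j)) ∧ A.Nonempty ∧
    (∀ j, j ≠ i → R' j = R j) ∧
    KellyP (R i) (f.choice n R' A) (f.choice n R A)

/-- `R` vetoes `x` in `A`: the alternatives of `A` other than `x` are tied with each other and
strictly preferred to `x`. -/
def Vetoes (R : U → U → Prop) (A : Finset U) (x : U) : Prop :=
  ∀ u ∈ A, u ≠ x → ¬ R x u ∧ ∀ v ∈ A, R u v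

/-- The preference relation `R` modified by putting `y` strictly above everything else. -/
def moveToTop (y : U) (R : U → U → Prop) (u v : U) : Prop := u = y ∨ v ≠ y ∧ R u v

/-- The relation that ranks `x` strictly last and ties everything else. -/
def vetoPref (x u v : U) : Prop := u = x → v = x

/-- The (intransitive) relation `a ≻ b ≻ c ≻ a` that ties every other pair. -/
def cyclicPref (a b c u v : U) : Prop := ¬ (u = b ∧ v = a ∨ u = c ∧ v = b ∨ u = a ∧ v = c)

/-- The profile with two voters vetoing each of `a`, `b`, `c`, whose ties in the pairwise
comparisons are broken cyclically by one further voter. -/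
def vetoCycleProfile (a b c : U) : Fin 7 → U → U → Prop :=
  ![cyclicPref a b c, vetoPref a, vetoPref a, vetoPref b, vetoPref b, vetoPref c, vetoPref c]

section Margin

variable {n : ℕ} {R : Fin n → U → U → Prop} {A : Finset U} {G : Finset (Fin n)} {y z : U}

lemma margin_eq_sum (R : Fin n → U → U → Prop) (a b : U) :
    margin R a b = ∑ i, ((if R i a b then 1 else 0) - (if R i b a then 1 else 0) : ℤ) := by
  simp only [margin, Finset.card_filter, Nat.cast_sum, ← Finset.sum_sub_distrib]
  refine Finset.sum_congr rfl fun i _ ↦ ?_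
  by_cases hab : R i a b <;> by_cases hba : R i b a <;> simp [StrictPref, hab, hba]

lemma margin_swap (R : Fin n → U → U → Prop) (a b : U) : margin R b a = -margin R a b :=
  (neg_sub _ _).symm

lemma condorcetWinner_iff_margin_pos :
    CondorcetWinner R A y ↔ y ∈ A ∧ ∀ z ∈ A, z ≠ y → 0 < margin R y z := by
  simp only [CondorcetWinner, margin_eq_sum, Finset.sum_sub_distrib, Finset.sum_boole,
    sub_pos, Nat.cast_lt, gt_iff_lt]

lemma margin_le_margin_piecewise_moveToTop :
    margin R y z ≤ margin (G.piecewise (fun i ↦ moveToTop y (R i)) R) y z := by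
  simp only [margin_eq_sum]
  refine Finset.sum_le_sum fun i _ ↦ ?_
  by_cases hi : i ∈ G
  · simp only [Finset.piecewise_eq_of_mem _ _ _ hi, moveToTop]
    split_ifs <;> simp_all
  · simp only [Finset.piecewise_eq_of_notMem _ _ _ hi, le_refl]

lemma margin_piecewise_moveToTop_of_indiff (hzy : z ≠ y) (hG : ∀ i ∈ G, Indiff (R i) y z) :
    margin (G.piecewise (fun i ↦ moveToTop y (R i)) R) y z = margin R y z + G.card := by
  have card_eq : (G.card : ℤ) = ∑ i, if i ∈ G then 1 else 0 := by simp
  rw [margin_eq_sum, margin_eq_sum, card_eq, ← Finset.sum_add_distrib]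
  refine Finset.sum_congr rfl fun i _ ↦ ?_
  by_cases hi : i ∈ G
  · simp [hi, moveToTop, hzy, (hG i hi).1, (hG i hi).2]
  · simp [hi]

end Margin

lemma complete_moveToTop {R : U → U → Prop} (hR : Complete R) (y : U) :
    Complete (moveToTop y R) := by
  intro u v
  have := hR u v
  unfold moveToTop
  tauto

lemma complete_vetoPref (x : U) : Complete (vetoPref x) := by
  intro u v
  unfold vetoPref
  tauto

lemma vetoes_vetoPref (A : Finset U) (x : U) : Vetoes (vetoPref x) A x :=
  fun _ _ hu ↦ ⟨fun h ↦ hu (h rfl), fun _ _ h ↦ absurd h hu⟩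

lemma complete_cyclicPref {a b c : U} (hab : a ≠ b) (hbc : b ≠ c) (hac : a ≠ c) :
    Complete (cyclicPref a b c) := by
  intro u v
  unfold cyclicPref
  grind

section Veto

variable {f : SCF U} {n : ℕ} {R R' : Fin n → U → U → Prop} {A : Finset U} {x y : U}

lemma mem_choice_of_vetoes (hf : ¬ KellyManipulable f) {i : Fin n}
    (hR : ∀ j, Complete (R j)) (hR' : ∀ j, Complete (R' j)) (hne : ∀ j, j ≠ i → R' j = R j)
    (hi : Vetoes (R i) A x) (hx : x ∈ f.choice n R A) : x ∈ f.choice n R' A := by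
  by_contra hx'
  have hxA : x ∈ A := f.choice_subset n R A hx
  have prefers : ∀ u ∈ f.choice n R' A, ¬ R i x u ∧ ∀ v ∈ A, R i u v := fun u hu ↦
    hi u (f.choice_subset n R' A hu) (ne_of_mem_of_not_mem hu hx')
  obtain ⟨w, hw⟩ := f.choice_nonempty n R' A ⟨x, hxA⟩
  exact hf ⟨n, R, R', A, i, hR, hR', ⟨x, hxA⟩, hne,
    fun u hu v hv ↦ (prefers u hu).2 v (f.choice_subset n R A hv),
    w, hw, x, hx, (prefers w hw).2 x hxA, (prefers w hw).1⟩

lemma mem_choice_of_forall_vetoes (hf : ¬ KellyManipulable f) {G : Finset (Fin n)}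
    (hR : ∀ j, Complete (R j)) (hR' : ∀ j, Complete (R' j)) (hne : ∀ j, j ∉ G → R' j = R j)
    (hG : ∀ i ∈ G, Vetoes (R i) A x) (hx : x ∈ f.choice n R A) : x ∈ f.choice n R' A := by
  induction G using Finset.induction_on generalizing R with
  | empty => rwa [funext fun j ↦ hne j (Finset.notMem_empty j)]
  | insert i G hiG ih =>
    have hR₁ : ∀ j, Complete (Function.update R i (R' i) j) :=
      Function.forall_update_iff R (fun _ ↦ Complete) |>.2 ⟨hR' i, fun j _ ↦ hR j⟩
    refine ih hR₁ (fun j hj ↦ ?_) (fun j hj ↦ ?_) ?_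
    · obtain rfl | hji := eq_or_ne j i
      · simp
      · rw [Function.update_of_ne hji, hne j (by simp [hji, hj])]
    · rw [Function.update_of_ne (ne_of_mem_of_not_mem hj hiG)]
      exact hG j (Finset.mem_insert_of_mem hj)
    · exact mem_choice_of_vetoes hf hR hR₁ (fun j hj ↦ Function.update_of_ne hj _ _)
        (hG i (Finset.mem_insert_self i G)) hx

lemma notMem_choice_of_forall_vetoes (hf : CondorcetExtension f) (hm : ¬ KellyManipulable f)
    {G : Finset (Fin n)} (hR : ∀ j, Complete (R j)) (hG : ∀ i ∈ G, Vetoes (R i) A x)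
    (hyA : y ∈ A) (hmx : 0 < margin R y x)
    (hmz : ∀ z ∈ A, z ≠ y → z ≠ x → -(G.card : ℤ) < margin R y z) :
    x ∉ f.choice n R A := by
  intro hx
  have hyx : y ≠ x := by
    rintro rfl
    simp only [margin, sub_self, lt_irrefl] at hmx
  set R' := G.piecewise (fun i ↦ moveToTop y (R i)) R
  have hR' : ∀ j, Complete (R' j) := fun j ↦
    G.piecewise_cases _ R Complete (complete_moveToTop (hR j) y) (hR j)
  have winner : CondorcetWinner R' A y := by
    refine condorcetWinner_iff_margin_pos.2 ⟨hyA, fun z hz hzy ↦ ?_⟩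
    obtain rfl | hzx := eq_or_ne z x
    · exact hmx.trans_le margin_le_margin_piecewise_moveToTop
    · have indiff : ∀ i ∈ G, Indiff (R i) y z := fun i hi ↦
        ⟨(hG i hi y hyA hyx).2 z hz, (hG i hi z hz hzx).2 y hyA⟩
      rw [margin_piecewise_moveToTop_of_indiff hzy indiff]
      linarith [hmz z hz hzy hzx]
  have hxR' : x ∈ f.choice n R' A :=
    mem_choice_of_forall_vetoes hm hR hR' (fun j ↦ Finset.piecewise_eq_of_notMem G _ R) hG hx
  rw [hf n R' A y hR' winner, Finset.mem_singleton] at hxR'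
  exact hyx hxR'.symm

end Veto

section VetoCycleProfile

variable {a b c : U}

lemma complete_vetoCycleProfile (hab : a ≠ b) (hbc : b ≠ c) (hac : a ≠ c) (j : Fin 7) :
    Complete (vetoCycleProfile a b c j) := by
  fin_cases j
  · exact complete_cyclicPref hab hbc hac
  all_goals exact complete_vetoPref _

lemma margin_vetoCycleProfile (hab : a ≠ b) (hbc : b ≠ c) (hac : a ≠ c) :
    margin (vetoCycleProfile a b c) a b = 1 ∧ margin (vetoCycleProfile a b c) b c = 1 ∧
      margin (vetoCycleProfile a b c) c a = 1 := by
  simp only [margin_eq_sum, Fin.sum_univ_seven]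
  simp [vetoCycleProfile, cyclicPref, vetoPref, hab, hbc, hac, hab.symm, hbc.symm, hac.symm]

end VetoCycleProfile

/-- Every Condorcet extension is P̂-manipulable when there are at least three alternatives. -/
theorem condorcet_extension_manipulable (f : SCF U)
    (hU : ∃ a b c : U, a ≠ b ∧ b ≠ c ∧ a ≠ c)
    (hf : CondorcetExtension f) :
    ∃ (n : ℕ) (R R' : Fin n → U → U → Prop) (A : Finset U) (i : Fin n),
      (∀ j, Complete (R j)) ∧ (∀ j, Complete (R' j)) ∧ A.Nonempty ∧
      (∀ j, j ≠ i → R' j = R j) ∧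
      KellyP (R i) (f.choice n R' A) (f.choice n R A) := by
  by_contra hm
  obtain ⟨a, b, c, hab, hbc, hac⟩ := hU
  have complete := complete_vetoCycleProfile hab hbc hac
  obtain ⟨margin_ab, margin_bc, margin_ca⟩ := margin_vetoCycleProfile hab hbc hac
  have ha : a ∉ f.choice 7 (vetoCycleProfile a b c) {a, b, c} :=
    notMem_choice_of_forall_vetoes (y := c) (G := {1, 2}) hf hm complete
      (by simp [vetoCycleProfile, vetoes_vetoPref]) (by simp)
      (by simp [margin_ca]) (by simp [margin_swap _ b c, margin_bc, hac])
  have hb : b ∉ f.choice 7 (vetoCycleProfile a b c) {a, b, c} :=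
    notMem_choice_of_forall_vetoes (y := a) (G := {3, 4}) hf hm complete
      (by simp [vetoCycleProfile, vetoes_vetoPref]) (by simp)
      (by simp [margin_ab]) (by simp [margin_swap _ c a, margin_ca])
  have hc : c ∉ f.choice 7 (vetoCycleProfile a b c) {a, b, c} :=
    notMem_choice_of_forall_vetoes (y := b) (G := {5, 6}) hf hm complete
      (by simp [vetoCycleProfile, vetoes_vetoPref]) (by simp)
      (by simp [margin_bc]) (by simp [margin_swap _ a b, margin_ab])
  obtain ⟨w, hw⟩ := f.choice_nonempty 7 (vetoCycleProfile a b c) {a, b, c} (by simp)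
  have hwA := f.choice_subset 7 _ _ hw
  simp only [Finset.mem_insert, Finset.mem_singleton] at hwA
  rcases hwA with rfl | rfl | rfl <;> contradiction
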